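/- arXiv:1205.2542 — 3 statements merged into one kernel-verified Lean document; each statement's English description precedes it below -/
import Mathlib

section
/- For every compact set K ⊂ ℝ^d, the set of indices (n,k) such that K ∩ B(x_{n,k}, 2^{1−n/2}) ≠ ∅ is finite. -/
open MeasureTheory Metric Real Filter Topology NNReal ENNReal

noncomputable section

abbrev E (d : ℕ) := EuclideanSpace ℝ (Fin d)

/-- The auxiliary function ρ associated with the potential `V`. -/
def rho (d : ℕ) (V : E d → ℝ) (x : E d) : ℝ :=
  sSup {r : ℝ | 0 < r ∧ r ^ ((2:ℝ) - (d:ℝ)) * (∫ y in ball x r, V y) ≤ 1}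

/-- The reverse Hölder class `RH_{d/2}`. -/
def IsRH (d : ℕ) (V : E d → ℝ) : Prop :=
  ∃ C : ℝ, 0 < C ∧ ∀ (x : E d) (r : ℝ), 0 < r →
    ((volume (ball x r)).toReal⁻¹ * ∫ y in ball x r, (V y) ^ ((d:ℝ)/2)) ^ ((2:ℝ)/(d:ℝ)) ≤
      C * ((volume (ball x r)).toReal⁻¹ * ∫ y in ball x r, V y)

/-- The set `𝓑_n = {x : 2^{-(n+1)/2} < ρ(x) ≤ 2^{-n/2}}`. -/
def Bset (d : ℕ) (V : E d → ℝ) (n : ℤ) : Set (E d) :=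
  {x | (2:ℝ) ^ (-((n:ℝ)+1)/2) < rho d V x ∧ rho d V x ≤ (2:ℝ) ^ (-(n:ℝ)/2)}

/-- Average of `f` over the ball `B(x,r)`. -/
def ballAvg (d : ℕ) (f : E d → ℝ) (x : E d) (r : ℝ) : ℝ :=
  (volume (ball x r)).toReal⁻¹ * ∫ y in ball x r, f y

/-- Mean oscillation of `f` over the ball `B(x,r)`. -/
def oscB (d : ℕ) (f : E d → ℝ) (x : E d) (r : ℝ) : ℝ :=
  ballAvg d (fun y => |f y - ballAvg d f x r|) x r

/-- The BMO seminorm, as an extended nonnegative real. -/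
def bmoNormE (d : ℕ) (f : E d → ℝ) : ℝ≥0∞ :=
  ⨆ (x : E d) (r : ℝ) (_ : 0 < r), ENNReal.ofReal (oscB d f x r)

/-- The `bmo_n` norm, as an extended nonnegative real. -/
def bmonNorm (d : ℕ) (n : ℤ) (f : E d → ℝ) : ℝ≥0∞ :=
  bmoNormE d f +
    ⨆ (x : E d) (r : ℝ) (_ : (2:ℝ) ^ (-(n:ℝ)/2) ≤ r),
      ENNReal.ofReal (ballAvg d (fun y => |f y|) x r)

/-- The `BMO_L` norm, as an extended nonnegative real. -/
def bmoLNorm (d : ℕ) (V : E d → ℝ) (f : E d → ℝ) : ℝ≥0∞ :=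
  bmoNormE d f +
    ⨆ (x : E d) (r : ℝ) (_ : rho d V x ≤ r),
      ENNReal.ofReal (ballAvg d (fun y => |f y|) x r)

/-- The Gauss function `P(x) = (4π)^{-d/2} e^{-|x|²/4}`. -/
def gaussP (d : ℕ) (x : E d) : ℝ := (4 * π) ^ (-(d:ℝ)/2) * Real.exp (-(‖x‖^2)/4)

/-- The local maximal function `𝓜_n f(x) = sup_{0<t<2^{-n/2}} |P_t * f(x)|`. -/
def MnMax (d : ℕ) (n : ℤ) (f : E d → ℝ) (x : E d) : ℝ≥0∞ :=
  ⨆ (t : ℝ) (_ : 0 < t ∧ t < (2:ℝ) ^ (-(n:ℝ)/2)),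
    ENNReal.ofReal |∫ z, t ^ (-(d:ℝ)) * gaussP d (t⁻¹ • (x - z)) * f z|

/-- The `h^1_n` norm `‖𝓜_n f‖_{L¹}`, as an extended nonnegative real. -/
def h1nNorm (d : ℕ) (n : ℤ) (f : E d → ℝ) : ℝ≥0∞ := ∫⁻ x, MnMax d n f x

/-- Membership in the local Hardy space `h^1_n`. -/
def Memh1n (d : ℕ) (n : ℤ) (f : E d → ℝ) : Prop :=
  Integrable f volume ∧ h1nNorm d n f < ⊤

/-- `(H^1_L, q)`-atoms related to the ball `B(x₀, r)`, with `L`-constant `CL`. -/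
def IsHLAtom (d : ℕ) (V : E d → ℝ) (CL : ℝ) (q : ℝ≥0∞) (a : E d → ℝ) (x₀ : E d) (r : ℝ) :
    Prop :=
  r ≤ CL * rho d V x₀ ∧ Function.support a ⊆ ball x₀ r ∧
    eLpNorm a q volume ≤ (volume (ball x₀ r)) ^ (1 / q.toReal - 1) ∧
    (r ≤ rho d V x₀ / CL → (∫ x, a x) = 0)
/-- For every compact set `K`, only finitely many of the balls `B(x_{n,k}, 2^{1-n/2})`
meet `K`. -/
theorem stmt4 (d : ℕ) (hd : 3 ≤ d) (V : E d → ℝ) (hV0 : ∀ x, 0 ≤ V x)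
    (hVloc : LocallyIntegrable V volume) (hVne : ¬ (V =ᵐ[volume] (0 : E d → ℝ)))
    (hRH : IsRH d V)
    (J : ℤ → Set ℕ) (pt : ℤ → ℕ → E d)
    (hpt : ∀ n k, k ∈ J n → pt n k ∈ Bset d V n)
    (hcover : ∀ n, Bset d V n ⊆ ⋃ k ∈ J n, ball (pt n k) ((2:ℝ) ^ (-(n:ℝ)/2)))
    (Cp : ℝ) (hCp : 0 < Cp)
    (hover : ∀ n k, k ∈ J n → ∀ R : ℝ, 2 ≤ R →
      {p : ℤ × ℕ | p.2 ∈ J p.1 ∧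
        (ball (pt n k) (R * (2:ℝ) ^ (-(n:ℝ)/2)) ∩
          ball (pt p.1 p.2) (R * (2:ℝ) ^ (-(p.1:ℝ)/2))).Nonempty}.Finite ∧
      (Nat.card {p : ℤ × ℕ | p.2 ∈ J p.1 ∧
        (ball (pt n k) (R * (2:ℝ) ^ (-(n:ℝ)/2)) ∩
          ball (pt p.1 p.2) (R * (2:ℝ) ^ (-(p.1:ℝ)/2))).Nonempty} : ℝ) ≤ R ^ Cp) :
    ∀ K : Set (E d), IsCompact K →
      {p : ℤ × ℕ | p.2 ∈ J p.1 ∧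
        (K ∩ ball (pt p.1 p.2) ((2:ℝ) ^ (1 - (p.1:ℝ)/2))).Nonempty}.Finite := by
  intro K hK
  by_cases hne : ∃ n k, k ∈ J n
  · obtain ⟨n, k, hk⟩ := hne
    obtain ⟨r, hr⟩ := hK.isBounded.subset_ball (pt n k)
    have hpos : (0:ℝ) < (2:ℝ) ^ (-(n:ℝ)/2) := Real.rpow_pos_of_pos two_pos _
    refine ((hover n k hk (max 2 (r / (2:ℝ) ^ (-(n:ℝ)/2))) (le_max_left _ _)).1).subset ?_
    rintro p ⟨hp, x, hxK, hxp⟩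
    refine ⟨hp, x, ball_subset_ball ?_ (hr hxK), ball_subset_ball ?_ hxp⟩
    · rw [← div_le_iff₀ hpos]
      exact le_max_right _ _
    · have h2 : (2:ℝ) ^ (1 - (p.1:ℝ)/2) = 2 * (2:ℝ) ^ (-(p.1:ℝ)/2) := by
        rw [show (1 - (p.1:ℝ)/2) = 1 + (-(p.1:ℝ)/2) by ring, Real.rpow_add two_pos,
          Real.rpow_one]
      rw [h2]
      exact mul_le_mul_of_nonneg_right (le_max_left _ _)
        (Real.rpow_pos_of_pos two_pos _).le
  · refine Set.finite_empty.subset ?_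
    rintro p ⟨hp, -⟩
    exact hne ⟨p.1, p.2, hp⟩
end
end

section
/- There exists a constant C > 0 such that for every x ∈ ℝ^d, the number of indices (n,k) with B(x_{n,k}, 2^{1−n/2}) ∩ B(x, 2ρ(x)) ≠ ∅ is at most C. -/
open MeasureTheory Metric Real Filter Topology NNReal ENNReal

noncomputable section

/-- There is a uniform bound on the number of balls `B(x_{n,k}, 2^{1-n/2})` meeting
`B(x, 2ρ(x))`. -/
theorem stmt5 (d : ℕ) (hd : 3 ≤ d) (V : E d → ℝ) (hV0 : ∀ x, 0 ≤ V x)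
    (hVloc : LocallyIntegrable V volume) (hVne : ¬ (V =ᵐ[volume] (0 : E d → ℝ)))
    (hRH : IsRH d V)
    (J : ℤ → Set ℕ) (pt : ℤ → ℕ → E d)
    (hpt : ∀ n k, k ∈ J n → pt n k ∈ Bset d V n)
    (hcover : ∀ n, Bset d V n ⊆ ⋃ k ∈ J n, ball (pt n k) ((2:ℝ) ^ (-(n:ℝ)/2)))
    (Cp : ℝ) (hCp : 0 < Cp)
    (hover : ∀ n k, k ∈ J n → ∀ R : ℝ, 2 ≤ R →
      {p : ℤ × ℕ | p.2 ∈ J p.1 ∧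
        (ball (pt n k) (R * (2:ℝ) ^ (-(n:ℝ)/2)) ∩
          ball (pt p.1 p.2) (R * (2:ℝ) ^ (-(p.1:ℝ)/2))).Nonempty}.Finite ∧
      (Nat.card {p : ℤ × ℕ | p.2 ∈ J p.1 ∧
        (ball (pt n k) (R * (2:ℝ) ^ (-(n:ℝ)/2)) ∩
          ball (pt p.1 p.2) (R * (2:ℝ) ^ (-(p.1:ℝ)/2))).Nonempty} : ℝ) ≤ R ^ Cp) :
    ∃ C : ℝ, 0 < C ∧ ∀ x : E d,
      {p : ℤ × ℕ | p.2 ∈ J p.1 ∧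
        (ball (pt p.1 p.2) ((2:ℝ) ^ (1 - (p.1:ℝ)/2)) ∩ ball x (2 * rho d V x)).Nonempty}.Finite ∧
      (Nat.card {p : ℤ × ℕ | p.2 ∈ J p.1 ∧
        (ball (pt p.1 p.2) ((2:ℝ) ^ (1 - (p.1:ℝ)/2)) ∩
          ball x (2 * rho d V x)).Nonempty} : ℝ) ≤ C := by
  refine ⟨(3:ℝ) ^ Cp, by positivity, fun x => ?_⟩
  by_cases hr : rho d V x ≤ 0
  · have hb : ball x (2 * rho d V x) = ∅ := ball_eq_empty.2 (by linarith)
    simp only [hb, Set.inter_empty, Set.not_nonempty_empty, and_false, Set.setOf_false]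
    refine ⟨Set.finite_empty, ?_⟩
    have h0 : Nat.card ((∅ : Set (ℤ × ℕ)) : Type) = 0 := by simp
    rw [h0]
    push_cast
    positivity
  · have hr' : 0 < rho d V x := not_le.1 hr
    set ρ := rho d V x with hρ
    obtain ⟨n, hn⟩ : ∃ n : ℤ, x ∈ Bset d V n := by
      refine ⟨⌊-2 * Real.logb 2 ρ⌋, ?_, ?_⟩
      · have h := Int.lt_floor_add_one (-2 * Real.logb 2 ρ)
        rw [← hρ, ← Real.lt_logb_iff_rpow_lt (by norm_num) hr']
        linarith
      · have h := Int.floor_le (-2 * Real.logb 2 ρ)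
        rw [← hρ, ← Real.logb_le_iff_le_rpow (by norm_num) hr']
        linarith
    have hc := hcover n hn
    simp only [Set.mem_iUnion] at hc
    obtain ⟨k, hk, hxk⟩ := hc
    obtain ⟨hfin, hcard⟩ := hover n k hk 3 (by norm_num)
    have hle : ρ ≤ (2:ℝ) ^ (-(n:ℝ)/2) := hn.2
    have hsub : {p : ℤ × ℕ | p.2 ∈ J p.1 ∧
        (ball (pt p.1 p.2) ((2:ℝ) ^ (1 - (p.1:ℝ)/2)) ∩ ball x (2 * ρ)).Nonempty} ⊆
        {p : ℤ × ℕ | p.2 ∈ J p.1 ∧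
        (ball (pt n k) (3 * (2:ℝ) ^ (-(n:ℝ)/2)) ∩
          ball (pt p.1 p.2) (3 * (2:ℝ) ^ (-(p.1:ℝ)/2))).Nonempty} := by
      rintro p ⟨hp, z, hz1, hz2⟩
      refine ⟨hp, z, ?_, ?_⟩
      · rw [mem_ball] at *
        have := dist_triangle z x (pt n k)
        linarith
      · rw [mem_ball] at *
        have e : (2:ℝ) ^ (1 - (p.1:ℝ)/2) = 2 * (2:ℝ) ^ (-(p.1:ℝ)/2) := by
          rw [show 1 - (p.1:ℝ)/2 = 1 + -(p.1:ℝ)/2 by ring, Real.rpow_add (by norm_num),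
            Real.rpow_one]
        have : (0:ℝ) < (2:ℝ) ^ (-(p.1:ℝ)/2) := by positivity
        linarith
    refine ⟨hfin.subset hsub, le_trans ?_ hcard⟩
    exact_mod_cast Nat.card_mono hfin hsub
end
end

section
/- For every A > 0 there exists a constant C > 0, depending only on d and A, such that for every n ∈ ℤ, every x₀ ∈ ℝ^d, every C^∞ function ψ : ℝ^d → ℝ with 0 ≤ ψ ≤ 1, supp ψ ⊂ B(x₀, 2^{1−n/2}) and ‖∇ψ‖_{L^∞} ≤ A·2^{n/2}, and every locally integrable f with ‖f‖_{bmo_n} < ∞, one has ‖ψ f‖_{bmo_n} ≤ C ‖f‖_{bmo_n}. -/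
open MeasureTheory Metric Real Filter Topology NNReal ENNReal

noncomputable section

lemma volpos {d : ℕ} (x : E d) {r : ℝ} (hr : 0 < r) : 0 < (volume (ball x r)).toReal :=
  ENNReal.toReal_pos (measure_ball_pos volume x hr).ne' measure_ball_lt_top.ne

lemma avg_mono {d : ℕ} {f g : E d → ℝ} {x : E d} {r : ℝ}
    (hf : IntegrableOn f (ball x r)) (hg : IntegrableOn g (ball x r))
    (h : ∀ y ∈ ball x r, f y ≤ g y) : ballAvg d f x r ≤ ballAvg d g x r := by
  unfold ballAvg
  exact mul_le_mul_of_nonneg_left (setIntegral_mono_on hf hg measurableSet_ball h) (by positivity)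

lemma avg_const {d : ℕ} (c : ℝ) (x : E d) {r : ℝ} (hr : 0 < r) :
    ballAvg d (fun _ => c) x r = c := by
  unfold ballAvg
  have := volpos x hr
  rw [setIntegral_const, smul_eq_mul, Measure.real]
  field_simp

lemma avg_add {d : ℕ} {f g : E d → ℝ} {x : E d} {r : ℝ}
    (hf : IntegrableOn f (ball x r)) (hg : IntegrableOn g (ball x r)) :
    ballAvg d (fun y => f y + g y) x r = ballAvg d f x r + ballAvg d g x r := by
  unfold ballAvg
  rw [integral_add hf hg, mul_add]

lemma avg_abs {d : ℕ} (f : E d → ℝ) (x : E d) (r : ℝ) :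
    |ballAvg d f x r| ≤ ballAvg d (fun y => |f y|) x r := by
  unfold ballAvg
  rw [abs_mul, abs_of_nonneg (by positivity : (0:ℝ) ≤ (volume (ball x r)).toReal⁻¹)]
  exact mul_le_mul_of_nonneg_left abs_integral_le_integral_abs (by positivity)

lemma int_const {d : ℕ} (c : ℝ) (x : E d) (r : ℝ) :
    IntegrableOn (fun _ : E d => c) (ball x r) :=
  integrableOn_const (hs := measure_ball_lt_top.ne)

lemma avg_sub_const {d : ℕ} {f : E d → ℝ} {x : E d} {r : ℝ} (hr : 0 < r)
    (hf : IntegrableOn f (ball x r)) (c : ℝ) :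
    |ballAvg d f x r - c| ≤ ballAvg d (fun y => |f y - c|) x r := by
  have h := avg_abs (fun y => f y + (-c)) x r
  rw [avg_add hf (int_const (-c) x r), avg_const _ x hr] at h
  simpa only [sub_eq_add_neg] using h

lemma osc_le {d : ℕ} {f : E d → ℝ} {x : E d} {r : ℝ} (hr : 0 < r)
    (hf : IntegrableOn f (ball x r)) (c : ℝ) :
    oscB d f x r ≤ 2 * ballAvg d (fun y => |f y - c|) x r := by
  have h1 := avg_sub_const hr hf c
  have i1 : IntegrableOn (fun y => |f y - c|) (ball x r) := (hf.sub (int_const c x r)).abs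
  have i2 : IntegrableOn (fun y => |f y - ballAvg d f x r|) (ball x r) :=
    (hf.sub (int_const _ x r)).abs
  have h2 : oscB d f x r ≤
      ballAvg d (fun y => |f y - c| + |ballAvg d f x r - c|) x r := by
    refine avg_mono i2 (i1.add (int_const _ x r)) fun y _ => ?_
    rw [abs_sub_comm (ballAvg d f x r) c]
    exact abs_sub_le _ _ _
  rw [avg_add i1 (int_const _ x r), avg_const _ x hr] at h2
  linarith

lemma vol_two {d : ℕ} (x : E d) {r : ℝ} :
    (volume (ball x (2*r))).toReal = 2^d * (volume (ball x r)).toReal := by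
  rw [Measure.addHaar_ball_mul_of_pos volume x (by norm_num : (0:ℝ) < 2),
    Measure.addHaar_ball_center volume x r]
  simp [ENNReal.toReal_mul]

lemma avg_two {d : ℕ} {f : E d → ℝ} {x : E d} {r : ℝ} (hr : 0 < r)
    (hf : IntegrableOn f (ball x (2*r))) (h0 : ∀ y, 0 ≤ f y) :
    ballAvg d f x r ≤ 2^d * ballAvg d f x (2*r) := by
  unfold ballAvg
  have := volpos x hr
  rw [vol_two, mul_inv, ← mul_assoc, ← mul_assoc, mul_inv_cancel₀ (by positivity), one_mul]
  refine mul_le_mul_of_nonneg_left ?_ (by positivity)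
  exact setIntegral_mono_set hf (ae_of_all _ h0) (ball_subset_ball (by linarith)).eventuallyLE

lemma growth {d : ℕ} {f : E d → ℝ} (hf : ∀ (x : E d) r, IntegrableOn f (ball x r)) {N R : ℝ}
    (hN : 0 ≤ N) (hR : 0 < R)
    (h1 : ∀ x r, 0 < r → oscB d f x r ≤ N)
    (h2 : ∀ x r, R ≤ r → ballAvg d (fun y => |f y|) x r ≤ N) (x : E d) (k : ℕ) :
    ∀ r, 0 < r → r ≤ 2 * R → R ≤ 2^k * r →
      r * |ballAvg d f x r| ≤ R * (2^(d+1) * N) := by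
  have hp : (1:ℝ) ≤ 2^d := one_le_pow₀ (by norm_num)
  have base : ∀ r, R ≤ r → r ≤ 2 * R → r * |ballAvg d f x r| ≤ R * (2^(d+1) * N) := by
    intro r hr hr2
    have := (avg_abs f x r).trans (h2 x r hr)
    calc r * |ballAvg d f x r| ≤ (2 * R) * N := by gcongr
      _ = R * (2 * 1 * N) := by ring
      _ ≤ R * (2 * 2^d * N) := by gcongr
      _ = _ := by ring
  induction k with
  | zero => intro r _ h3 h4; exact base r (by simpa using h4) h3
  | succ k ih =>
    intro r hr h3 h4
    rcases le_or_gt R r with h | h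
    · exact base r h h3
    have e := ih (2*r) (by linarith) (by linarith) (by rw [pow_succ] at h4; linarith)
    have s1 := avg_sub_const hr (hf x r) (ballAvg d f x (2*r))
    have s2 := avg_two hr (f := fun y => |f y - ballAvg d f x (2*r)|) (x := x)
      ((hf x (2*r)).sub (int_const _ x _)).abs (fun _ => abs_nonneg _)
    have s3 := h1 x (2*r) (by linarith)
    unfold oscB at s3
    have s4 : |ballAvg d f x r| ≤ |ballAvg d f x (2*r)| + 2^d * N := by
      have := abs_sub_abs_le_abs_sub (ballAvg d f x r) (ballAvg d f x (2*r))
      have := mul_le_mul_of_nonneg_left s3 (by positivity : (0:ℝ) ≤ 2^d)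
      linarith
    have s5 := mul_le_mul_of_nonneg_left s4 hr.le
    have s6 : r * (2^d * N) ≤ R * (2^d * N) := by gcongr
    rw [pow_succ] at e ⊢
    nlinarith

/-- `ψ_{n,k}` is a pointwise multiplier of `bmo_n`, uniformly in `n` and `k`. -/
theorem stmt9 (d : ℕ) (hd : 3 ≤ d) :
    ∀ A : ℝ, 0 < A → ∃ C : ℝ, 0 < C ∧
      ∀ (n : ℤ) (x₀ : E d) (ψ : E d → ℝ),
        ContDiff ℝ (⊤ : ℕ∞) ψ → (∀ y, 0 ≤ ψ y ∧ ψ y ≤ 1) →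
        tsupport ψ ⊆ ball x₀ ((2:ℝ) ^ (1 - (n:ℝ)/2)) →
        (∀ y, ‖fderiv ℝ ψ y‖ ≤ A * (2:ℝ) ^ ((n:ℝ)/2)) →
        ∀ f : E d → ℝ, LocallyIntegrable f volume → bmonNorm d n f < ⊤ →
        bmonNorm d n (fun y => ψ y * f y) ≤ ENNReal.ofReal C * bmonNorm d n f := by
  intro A hA
  refine ⟨2 * (1 + A * 2^(d+1)) + 1, by positivity, ?_⟩
  intro n x₀ ψ hψ h01 _ hgrad f hf hfin
  set R : ℝ := (2:ℝ) ^ (-(n:ℝ)/2) with hRdef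
  have hR : 0 < R := by positivity
  have hRinv : (2:ℝ) ^ ((n:ℝ)/2) = R⁻¹ := by
    rw [hRdef, ← Real.rpow_neg (by norm_num)]; congr 1; ring
  rw [hRinv] at hgrad
  set N : ℝ := (bmonNorm d n f).toReal with hNdef
  have hN : 0 ≤ N := ENNReal.toReal_nonneg
  have hNE : bmonNorm d n f = ENNReal.ofReal N := (ENNReal.ofReal_toReal hfin.ne).symm
  have hI : ∀ (x : E d) r, IntegrableOn f (ball x r) := fun x r =>
    (hf.integrableOn_isCompact (isCompact_closedBall x r)).mono_set ball_subset_closedBall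
  have h1 : ∀ x r, 0 < r → oscB d f x r ≤ N := by
    intro x r hr
    rw [← ENNReal.ofReal_le_ofReal_iff hN, ← hNE]
    refine le_trans ?_ le_self_add
    exact le_iSup_of_le x (le_iSup_of_le r (le_iSup_of_le hr le_rfl))
  have h2 : ∀ x r, R ≤ r → ballAvg d (fun y => |f y|) x r ≤ N := by
    intro x r hr
    rw [← ENNReal.ofReal_le_ofReal_iff hN, ← hNE]
    refine le_trans ?_ le_add_self
    exact le_iSup_of_le x (le_iSup_of_le r (le_iSup_of_le hr le_rfl))
  have hJ : ∀ (x : E d) r, IntegrableOn (fun y => ψ y * f y) (ball x r) := by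
    intro x r
    refine (hI x r).bdd_mul (c := 1) hψ.continuous.aestronglyMeasurable (ae_of_all _ fun y => ?_)
    rw [Real.norm_eq_abs, abs_of_nonneg (h01 y).1]; exact (h01 y).2
  have hmul : ∀ y (t : ℝ), |ψ y * t| ≤ |t| := by
    intro y t
    rw [abs_mul, abs_of_nonneg (h01 y).1]
    exact mul_le_of_le_one_left (abs_nonneg _) (h01 y).2
  have hlip : ∀ x y, |ψ y - ψ x| ≤ A * R⁻¹ * ‖y - x‖ := fun x y =>
    convex_univ.norm_image_sub_le_of_norm_fderiv_le (𝕜 := ℝ)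
      (fun z _ => (hψ.differentiable (by simp)).differentiableAt) (fun z _ => hgrad z)
      (Set.mem_univ x) (Set.mem_univ y)
  have k2 : ∀ x r, R ≤ r → ballAvg d (fun y => |ψ y * f y|) x r ≤ N := fun x r hr =>
    (avg_mono (hJ x r).abs (hI x r).abs fun y _ => hmul y _).trans (h2 x r hr)
  have k1 : ∀ x r, 0 < r → oscB d (fun y => ψ y * f y) x r ≤ 2 * (1 + A * 2^(d+1)) * N := by
    intro x r hr
    rcases le_or_gt R r with h | h
    · have := osc_le hr (hJ x r) 0
      simp only [sub_zero] at this
      have := k2 x r h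
      have : 0 ≤ A * 2^(d+1) * N := by positivity
      linarith
    set c := ballAvg d f x r with hc
    have hs := osc_le hr (hJ x r) (ψ x * c)
    have i1 : IntegrableOn (fun y => |f y - c|) (ball x r) := ((hI x r).sub (int_const c x r)).abs
    have hb : ballAvg d (fun y => |ψ y * f y - ψ x * c|) x r ≤
        ballAvg d (fun y => |f y - c| + A * R⁻¹ * r * |c|) x r := by
      refine avg_mono ((hJ x r).sub (int_const _ x r)).abs (i1.add (int_const _ x r)) fun y hy => ?_
      have e : ψ y * f y - ψ x * c = ψ y * (f y - c) + (ψ y - ψ x) * c := by ring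
      rw [e]
      refine (abs_add_le _ _).trans (add_le_add (hmul _ _) ?_)
      rw [abs_mul]
      have hy' : ‖y - x‖ ≤ r := by rw [← dist_eq_norm]; exact (mem_ball.1 hy).le
      have := hlip x y
      gcongr
      exact this.trans (by gcongr)
    rw [avg_add i1 (int_const _ x r), avg_const _ x hr] at hb
    obtain ⟨k, hk⟩ := pow_unbounded_of_one_lt (R / r) (by norm_num : (1:ℝ) < 2)
    have hg := growth hI hN hR h1 h2 x k r hr (by linarith) ((div_lt_iff₀ hr).1 hk).le
    have h3 := h1 x r hr
    unfold oscB at h3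
    rw [← hc] at hg h3
    have h4 : A * R⁻¹ * r * |c| ≤ A * (2^(d+1) * N) := by
      calc A * R⁻¹ * r * |c| = A * R⁻¹ * (r * |c|) := by ring
        _ ≤ A * R⁻¹ * (R * (2^(d+1) * N)) := by gcongr
        _ = _ := by field_simp
    linarith
  rw [hNE, ← ENNReal.ofReal_mul (by positivity), add_mul, one_mul,
    ENNReal.ofReal_add (by positivity) hN]
  unfold bmonNorm bmoNormE
  refine add_le_add ?_ ?_
  · exact iSup_le fun x => iSup_le fun r => iSup_le fun hr => ENNReal.ofReal_le_ofReal (k1 x r hr)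
  · exact iSup_le fun x => iSup_le fun r => iSup_le fun hr => ENNReal.ofReal_le_ofReal (k2 x r hr)
end
end
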